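/- Let t ≥ 4 and k ≥ 1 be integers with t = 3k + 1 or t = 3k − 1. Then the independence complex Ind(C_t) of the cycle with t vertices — realized as the geometric realization of the nerve of the poset of nonempty independent sets of C_t ordered by inclusion — is homotopy equivalent to the sphere S^{k−1}. -/

import Mathlib

open CategoryTheory

/-- The poset of nonempty independent sets of a simple graph `G`, ordered by
inclusion: the face poset of the independence complex `Ind(G)`. -/
def IndPoset {V : Type} (G : SimpleGraph V) : Type :=
  {s : Finset V // s.Nonempty ∧ ∀ x ∈ s, ∀ y ∈ s, ¬ G.Adj x y}

instance {V : Type} (G : SimpleGraph V) : Preorder (IndPoset G) :=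
  Subtype.preorder _

/-- The independence complex `Ind(G)`, realized topologically as the geometric
realization of the nerve (order complex) of the poset of nonempty independent sets
of `G` ordered by inclusion. -/
noncomputable def indComplex {V : Type} (G : SimpleGraph V) : TopCat :=
  SSet.toTop.obj (nerve (IndPoset G))

open CategoryTheory Simplicial Opposite

noncomputable section Realization

/-- characteristic map of a simplex -/
def rho (X : SSet.{0}) {n : SimplexCategory} (x : X.obj (op n)) :
    stdSimplex ℝ (Fin (n.len + 1)) → (SSet.toTop.obj X : TopCat) :=
  fun a => SSet.toTop.map (SSet.yonedaEquiv.symm x) (n.toTopHomeo.symm a)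

lemma rho_continuous (X : SSet.{0}) {n : SimplexCategory} (x : X.obj (op n)) :
    Continuous (rho X x) := by
  unfold rho
  exact (SSet.toTop.map (SSet.yonedaEquiv.symm x)).hom.continuous.comp
    n.toTopHomeo.symm.continuous

lemma rho_map (X : SSet.{0}) {n m : SimplexCategory} (f : m ⟶ n) (x : X.obj (op n))
    (a : stdSimplex ℝ (Fin (m.len + 1))) :
    rho X (X.map f.op x) a = rho X x (stdSimplex.map f a) := by
  unfold rho
  rw [SimplexCategory.toTopHomeo_symm_naturality_apply]
  have : SSet.yonedaEquiv.symm (X.map f.op x) =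
      SSet.stdSimplex.map f ≫ SSet.yonedaEquiv.symm x := by
    exact CategoryTheory.uliftYonedaEquiv_symm_map f.op x
  rw [this, Functor.map_comp]
  rfl

lemma rho_surj (X : SSet.{0}) (p : (SSet.toTop.obj X : TopCat)) :
    ∃ (n : SimplexCategory) (x : X.obj (op n)) (a : stdSimplex ℝ (Fin (n.len + 1))),
      rho X x a = p := by
  have hc := Limits.isColimitOfPreserves (SSet.toTop ⋙ forget TopCat)
    (Presheaf.colimitOfRepresentable.{0} X)
  obtain ⟨j, y, hy⟩ := Limits.Types.jointly_surjective_of_isColimit hc p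
  refine ⟨j.unop.1.unop, j.unop.2, SimplexCategory.toTopHomeo _ y, ?_⟩
  refine Eq.trans ?_ hy
  exact congrArg (SSet.toTop.map (SSet.yonedaEquiv.symm j.unop.2))
    (Homeomorph.symm_apply_apply (SimplexCategory.toTopHomeo _) y)

lemma rho_desc (X : SSet.{0}) (Y : TopCat.{0})
    (φ : ∀ n : SimplexCategory, X.obj (op n) → C(stdSimplex ℝ (Fin (n.len + 1)), Y))
    (hφ : ∀ (n m : SimplexCategory) (f : m ⟶ n) (x : X.obj (op n)) a,
      φ m (X.map f.op x) a = φ n x (stdSimplex.map f a)) :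
    ∃ Φ : C((SSet.toTop.obj X : TopCat), Y), ∀ n (x : X.obj (op n)) a,
      Φ (rho X x a) = φ n x a := by
  let ψ : X ⟶ TopCat.toSSet.obj Y :=
    { app := fun n => ↾fun x => (Y.toSSetObjEquiv n).symm (φ n.unop x)
      naturality := by
        intro n m f
        ext x
        apply (Y.toSSetObjEquiv m).injective
        ext a
        exact hφ n.unop m.unop f.unop x a }
  refine ⟨((sSetTopAdj.homEquiv X Y).symm ψ).hom, fun n x a => ?_⟩
  have h2 : (sSetTopAdj.homEquiv X Y) ((sSetTopAdj.homEquiv X Y).symm ψ) = ψ :=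
    Equiv.apply_symm_apply _ _
  rw [Adjunction.homEquiv_unit] at h2
  have h3 := congrArg (fun t : X ⟶ TopCat.toSSet.obj Y => (t.app (op n) x).down) h2
  have h6 := sSetTopAdj_unit_app_app_down X (op n) x
  have h7 : SSet.toTopSimplex.inv.app _ ≫ SSet.toTop.map (SSet.yonedaEquiv.symm x) ≫ 
     ((sSetTopAdj.homEquiv X Y).symm ψ) = (ψ.app (op n) x).down := by
    rw [← h3, ← Category.assoc, ← h6]
    rfl
  have h4 := congrArg (fun t => t.hom (ULift.up a)) h7
  have h5 : (Y.toSSetObjEquiv (op n)) (ψ.app (op n) x) a = φ n x a := by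
    exact congrArg (fun t : C(stdSimplex ℝ (Fin (n.len + 1)), Y) => t a)
      (Equiv.apply_symm_apply (Y.toSSetObjEquiv (op n)) (φ n x))
  rw [← h5]
  exact h4
end Realization

noncomputable section NerveReal

variable {P : Type} [PartialOrder P]

/-- The simplex of the nerve given by a monotone chain. -/
def mkS {n : ℕ} (c : Fin (n + 1) →o P) : (nerve P).obj (op ⦋n⦌) := c.monotone.functor

/-- The point of the realization with barycentric coordinates `a` in the chain `c`. -/
def RR {n : ℕ} (c : Fin (n + 1) →o P) (a : stdSimplex ℝ (Fin (n + 1))) :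
    (SSet.toTop.obj (nerve P) : TopCat) := rho (nerve P) (n := ⦋n⦌) (mkS c) a

lemma RR_continuous {n : ℕ} (c : Fin (n + 1) →o P) : Continuous (RR c) :=
  rho_continuous _ _

lemma RR_map {n m : ℕ} (c : Fin (n + 1) →o P) (f : Fin (m + 1) →o Fin (n + 1)) 
    (a : stdSimplex ℝ (Fin (m + 1))) :
    RR (c.comp f) a = RR c (stdSimplex.map f a) :=
  rho_map (nerve P) (SimplexCategory.mkHom f) (mkS c) a

lemma RR_surj (p : (SSet.toTop.obj (nerve P) : TopCat)) :
    ∃ (n : ℕ) (c : Fin (n + 1) →o P) (a : stdSimplex ℝ (Fin (n + 1))), RR c a = p := by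
  obtain ⟨n, x, a, h⟩ := rho_surj _ p
  refine ⟨n.len, ⟨fun i => x.obj i, fun i j hij => leOfHom (x.map (homOfLE hij))⟩, a, ?_⟩
  rw [← h]
  rfl

lemma map_sum_eq {n m : ℕ} (f : Fin (m + 1) → Fin (n + 1)) (a : stdSimplex ℝ (Fin (m + 1)))
    (w : Fin (n + 1) → ℝ) :
    ∑ i, (stdSimplex.map f a) i * w i = ∑ i, a i * w (f i) := by
  simp only [stdSimplex.map_coe, FunOnFinite.linearMap_apply_apply, Finset.sum_mul]
  rw [← Finset.sum_fiberwise Finset.univ f]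
  refine Finset.sum_congr rfl fun i _ => Finset.sum_congr rfl fun j hj => ?_
  rw [(Finset.mem_filter.1 hj).2]

lemma exists_ev (w : P → ℝ) : ∃ Φ : C((SSet.toTop.obj (nerve P) : TopCat), ℝ), 
    ∀ n (c : Fin (n + 1) →o P) a, Φ (RR c a) = ∑ i, a i * w (c i) := by
  obtain ⟨Φ, h⟩ := rho_desc (nerve P) (TopCat.of ℝ)
    (fun n x => ⟨fun a => ∑ i, a i * w (x.obj i), by
      refine continuous_finsetSum _ fun i _ => Continuous.mul ?_ continuous_const
      exact (continuous_apply i).comp continuous_subtype_val⟩)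
    (fun n m f x a => (map_sum_eq f a (fun i => w (x.obj i))).symm)
  exact ⟨Φ, fun n c a => h ⦋n⦌ (mkS c) a⟩

/-- Affine extension of a function on the vertices. -/
def ev (w : P → ℝ) : C((SSet.toTop.obj (nerve P) : TopCat), ℝ) := (exists_ev w).choose

lemma ev_RR (w : P → ℝ) {n : ℕ} (c : Fin (n + 1) →o P) (a) :
    ev w (RR c a) = ∑ i, a i * w (c i) := (exists_ev w).choose_spec n c a

lemma RR_normal : ∀ (n : ℕ) (c : Fin (n + 1) →o P) (a : stdSimplex ℝ (Fin (n + 1))),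
    ∃ (m : ℕ) (c' : Fin (m + 1) →o P) (b : stdSimplex ℝ (Fin (m + 1))),
      StrictMono c' ∧ (∀ i, 0 < b i) ∧ RR c a = RR c' b := by
  intro n
  induction n with
  | zero =>
    intro c a
    refine ⟨0, c, a, Subsingleton.strictMono (α := Fin 1) c, ?_, rfl⟩
    intro i
    have := stdSimplex.sum_eq_one a
    have hi : i = 0 := Subsingleton.elim (α := Fin 1) _ _
    subst hi
    simp at this
    simp
  | succ n ih =>
    intro c a
    by_cases h : ∃ j, a j = 0
    · obtain ⟨j, hj⟩ := h
      have hs := stdSimplex.sum_eq_one a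
      rw [Fin.sum_univ_succAbove _ j, hj, zero_add] at hs
      let a' : stdSimplex ℝ (Fin (n + 1)) := ⟨fun i => a (j.succAbove i), 
        fun i => stdSimplex.zero_le a _, hs⟩
      have ha : a = stdSimplex.map (j.succAboveOrderEmb.toOrderHom) a' := by
        ext i
        rw [stdSimplex.map_coe, FunOnFinite.linearMap_apply_apply]
        rcases Fin.eq_self_or_eq_succAbove j i with rfl | ⟨k, rfl⟩
        · rw [Finset.filter_eq_empty_iff.2]
          · simpa using hj
          · intro k _
            exact Fin.succAbove_ne _ _
        · have : Finset.univ.filter (fun x => j.succAboveOrderEmb.toOrderHom x = j.succAbove k)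
              = {k} := by
            ext x; simp
          rw [this, Finset.sum_singleton]
          rfl
      obtain ⟨m, c', b, h1, h2, h3⟩ := ih (c.comp j.succAboveOrderEmb.toOrderHom) a'
      exact ⟨m, c', b, h1, h2, by rw [ha, ← RR_map, h3]⟩
    · by_cases hc : StrictMono c
      · exact ⟨n + 1, c, a, hc, fun i => lt_of_le_of_ne (stdSimplex.zero_le a i)
          fun hi => h ⟨i, hi.symm⟩, rfl⟩
      · rw [Fin.strictMono_iff_lt_succ] at hc
        push Not at hc
        obtain ⟨i, hi⟩ := hc
        have hi' : c i.castSucc = c i.succ := by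
          rcases (c.monotone (Fin.castSucc_lt_succ (i := i)).le).lt_or_eq with h | h
          · exact absurd h hi
          · exact h
        have hcc : c = (c.comp i.castSucc.succAboveOrderEmb.toOrderHom).comp
            ⟨i.predAbove, Fin.predAbove_right_monotone i⟩ := by
          ext k
          by_cases hk : k = i.castSucc
          · subst hk
            simp [hi']
          · simp [Fin.succAbove_predAbove hk]
        obtain ⟨m, c', b, h1, h2, h3⟩ := ih (c.comp i.castSucc.succAboveOrderEmb.toOrderHom) 
          (stdSimplex.map (⟨i.predAbove, Fin.predAbove_right_monotone i⟩ : Fin (n+2) →o Fin (n+1)) a)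
        exact ⟨m, c', b, h1, h2, by rw [hcc, RR_map, h3]⟩

open Classical in
lemma ev_single_strict {n : ℕ} (c : Fin (n + 1) →o P) (hc : StrictMono c) (a) (i) :
    ev (Pi.single (c i) 1) (RR c a) = a i := by
  rw [ev_RR, Finset.sum_eq_single i]
  · simp
  · intro j _ hj
    rw [Pi.single_eq_of_ne (fun h => hj (hc.injective h)), mul_zero]
  · simp

open Classical in
lemma ev_single_pos_iff {n : ℕ} (c : Fin (n + 1) →o P) (hc : StrictMono c) 
    (a : stdSimplex ℝ (Fin (n + 1))) (ha : ∀ i, 0 < a i) (p : P) :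
    0 < ev (Pi.single p 1) (RR c a) ↔ p ∈ Set.range c := by
  constructor
  · intro h
    by_contra hp
    rw [ev_RR, Finset.sum_eq_zero] at h
    · exact lt_irrefl _ h
    · intro i _
      rw [Pi.single_eq_of_ne (fun h => hp ⟨i, h⟩), mul_zero]
  · rintro ⟨i, rfl⟩
    rw [ev_single_strict c hc]
    exact ha i

open Classical in
lemma ev_injective (q q' : (SSet.toTop.obj (nerve P) : TopCat))
    (h : ∀ p : P, ev (Pi.single p 1) q = ev (Pi.single p 1) q') : q = q' := by
  obtain ⟨n, c, a, rfl⟩ := RR_surj q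
  obtain ⟨n', c', a', rfl⟩ := RR_surj q'
  obtain ⟨m, d, b, h1, h2, h3⟩ := RR_normal n c a
  obtain ⟨m', d', b', h1', h2', h3'⟩ := RR_normal n' c' a'
  rw [h3, h3'] at h ⊢
  have hr : Set.range d = Set.range d' := by
    ext p
    rw [← ev_single_pos_iff d h1 b h2, h p, ev_single_pos_iff d' h1' b' h2']
  have hm : m = m' := by
    have e1 := Set.ncard_range_of_injective h1.injective
    have e2 := Set.ncard_range_of_injective h1'.injective
    rw [hr, e2] at e1
    simpa using e1.symm
  subst hm
  have hd : d = d' := by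
    ext i
    exact congrFun ((StrictMono.range_inj h1 h1').1 hr) i
  subst hd
  have hb : b = b' := by
    ext i
    have := h (d i)
    rwa [ev_single_strict d h1, ev_single_strict d h1] at this
  rw [hb]

open Classical in
lemma ev_eq_sum [Fintype P] (w : P → ℝ) (q : (SSet.toTop.obj (nerve P) : TopCat)) :
    ev w q = ∑ p, w p * ev (Pi.single p 1) q := by
  obtain ⟨n, c, a, rfl⟩ := RR_surj q
  simp only [ev_RR, Finset.mul_sum]
  rw [Finset.sum_comm]
  refine Finset.sum_congr rfl fun i _ => ?_
  rw [Finset.sum_eq_single (c i)]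
  · simp [mul_comm]
  · intro p _ hp
    rw [Pi.single_eq_of_ne (Ne.symm hp)]
    simp
  · simp

lemma nerve_compact [Finite P] : CompactSpace (SSet.toTop.obj (nerve P) : TopCat) := by
  have hfin : ∀ n, Finite (Fin (n + 1) →o P) := fun n => 
    Finite.of_injective (fun c => (c : Fin (n+1) → P)) DFunLike.coe_injective
  constructor
  have : (Set.univ : Set (SSet.toTop.obj (nerve P) : TopCat)) = 
      ⋃ m : Fin (Nat.card P + 1), ⋃ c : Fin ((m : ℕ) + 1) →o P, Set.range (RR c) := by
    symm
    rw [Set.eq_univ_iff_forall]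
    intro q
    obtain ⟨n, c, a, rfl⟩ := RR_surj q
    obtain ⟨m, d, b, h1, h2, h3⟩ := RR_normal n c a
    have hm : m < Nat.card P + 1 := by
      have := Nat.card_le_card_of_injective d h1.injective
      simp at this
      omega
    simp only [Set.mem_iUnion]
    exact ⟨⟨m, hm⟩, d, b, h3.symm⟩
  rw [this]
  exact isCompact_iUnion fun m => isCompact_iUnion fun c => isCompact_range (RR_continuous c)

end NerveReal

noncomputable section IndReal

variable {V : Type} [Fintype V] (G : SimpleGraph V)

instance indPartialOrder {V : Type} (G : SimpleGraph V) : PartialOrder (IndPoset G) :=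
  { (inferInstance : Preorder (IndPoset G)) with
    le_antisymm := fun _ _ h1 h2 => Subtype.ext (Finset.Subset.antisymm h1 h2) }

instance indFinite : Finite (IndPoset G) := Subtype.finite

noncomputable instance indFintype : Fintype (IndPoset G) := Fintype.ofFinite _

/-- The cone over the independence complex. -/
def indCone : Set (V → ℝ) := {f | (∀ v, 0 ≤ f v) ∧ ∀ v w, G.Adj v w → f v * f w = 0}

open Classical in
lemma chain_inj_aux : ∀ (n : ℕ) (g h : IndPoset G → ℝ)
    (_ : (Finset.univ.filter (fun s => g s ≠ 0)).card +
      (Finset.univ.filter (fun s => h s ≠ 0)).card ≤ n)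
    (_ : ∀ s, 0 ≤ g s) (_ : ∀ s, 0 ≤ h s)
    (_ : ∀ s t, g s ≠ 0 → g t ≠ 0 → s ≤ t ∨ t ≤ s)
    (_ : ∀ s t, h s ≠ 0 → h t ≠ 0 → s ≤ t ∨ t ≤ s)
    (_ : ∀ v, (∑ s, if v ∈ s.1 then g s else 0) = ∑ s, if v ∈ s.1 then h s else 0), g = h := by
  have key0 : ∀ (g : IndPoset G → ℝ), (∀ s, 0 ≤ g s) → ∀ v,
      ((∑ s, if v ∈ s.1 then g s else 0) ≠ 0 ↔ ∃ s, g s ≠ 0 ∧ v ∈ s.1) := by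
    intro g hg v
    rw [Ne, Finset.sum_eq_zero_iff_of_nonneg (fun s _ => by split_ifs; exacts [hg s, le_rfl])]
    simp only [Finset.mem_univ, true_imp_iff]
    push Not
    constructor
    · rintro ⟨s, hs⟩
      by_cases hv : v ∈ s.1
      · exact ⟨s, by simpa [hv] using hs, hv⟩
      · simp [hv] at hs
    · rintro ⟨s, hs, hv⟩
      exact ⟨s, by simpa [hv] using hs⟩
  have keytop : ∀ (g : IndPoset G → ℝ), 
      (∀ s t, g s ≠ 0 → g t ≠ 0 → s ≤ t ∨ t ≤ s) → g ≠ 0 → ∃ S, g S ≠ 0 ∧ ∀ s, g s ≠ 0 → s ≤ S := by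
    intro g hg hne
    obtain ⟨s0, hs0⟩ := Function.ne_iff.1 hne
    obtain ⟨S, hS⟩ := (Finset.univ.filter (fun s => g s ≠ 0)).exists_maximal ⟨s0, by simpa using hs0⟩
    have hS1 : g S ≠ 0 := by simpa using hS.1
    refine ⟨S, hS1, fun s hs => ?_⟩
    rcases hg s S hs hS1 with h | h
    · exact h
    · exact hS.2 (by simpa using hs) h
  intro n
  induction n with
  | zero =>
    intro g h hc _ _ _ _ _
    have h1 : (Finset.univ.filter (fun s => g s ≠ 0)) = ∅ := by
      rw [← Finset.card_eq_zero]; omega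
    have h2 : (Finset.univ.filter (fun s => h s ≠ 0)) = ∅ := by
      rw [← Finset.card_eq_zero]; omega
    ext s
    have e1 := Finset.filter_eq_empty_iff.1 h1 (Finset.mem_univ s)
    have e2 := Finset.filter_eq_empty_iff.1 h2 (Finset.mem_univ s)
    push Not at e1 e2
    rw [e1, e2]
  | succ n ih =>
    -- main step, assuming an order on the top coefficients
    have main : ∀ (g h : IndPoset G → ℝ)
      (_ : (Finset.univ.filter (fun s => g s ≠ 0)).card +
        (Finset.univ.filter (fun s => h s ≠ 0)).card ≤ n + 1)
      (_ : ∀ s, 0 ≤ g s) (_ : ∀ s, 0 ≤ h s)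
      (_ : ∀ s t, g s ≠ 0 → g t ≠ 0 → s ≤ t ∨ t ≤ s)
      (_ : ∀ s t, h s ≠ 0 → h t ≠ 0 → s ≤ t ∨ t ≤ s)
      (_ : ∀ v, (∑ s, if v ∈ s.1 then g s else 0) = ∑ s, if v ∈ s.1 then h s else 0)
      (S : IndPoset G) (_ : g S ≠ 0) (_ : g S ≤ h S), g = h := by
      intro g h hc hg hh cg ch hs S hS hle
      let h' : IndPoset G → ℝ := Function.update h S (h S - g S)
      let g' : IndPoset G → ℝ := Function.update g S 0
      have hS' : h S ≠ 0 := fun e => hS (le_antisymm (e ▸ hle) (hg S))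
      have sg : ∀ s, g' s ≠ 0 → g s ≠ 0 := by
        intro s; by_cases e : s = S
        · subst e; simp [g']
        · simp [g', e]
      have sh : ∀ s, h' s ≠ 0 → h s ≠ 0 := by
        intro s; by_cases e : s = S
        · subst e; intro _; exact hS'
        · simp [h', e]
      have sumg : ∀ v, (∑ s, if v ∈ s.1 then g' s else 0) = 
          (∑ s, if v ∈ s.1 then g s else 0) - if v ∈ S.1 then g S else 0 := by
        intro v
        rw [← Finset.add_sum_erase _ _ (Finset.mem_univ S),
          ← Finset.add_sum_erase (a := S) _ (fun s : IndPoset G => if v ∈ s.1 then g s else 0) (Finset.mem_univ S)]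
        have : ∑ x ∈ Finset.univ.erase S, (if v ∈ x.1 then g' x else 0) = 
            ∑ x ∈ Finset.univ.erase S, (if v ∈ x.1 then g x else 0) := by
          refine Finset.sum_congr rfl fun x hx => ?_
          simp [g', Finset.ne_of_mem_erase hx]
        rw [this]
        simp [g']
      have sumh : ∀ v, (∑ s, if v ∈ s.1 then h' s else 0) = 
          (∑ s, if v ∈ s.1 then h s else 0) - if v ∈ S.1 then g S else 0 := by
        intro v
        rw [← Finset.add_sum_erase _ _ (Finset.mem_univ S),
          ← Finset.add_sum_erase (a := S) _ (fun s : IndPoset G => if v ∈ s.1 then h s else 0) (Finset.mem_univ S)]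
        have : ∑ x ∈ Finset.univ.erase S, (if v ∈ x.1 then h' x else 0) = 
            ∑ x ∈ Finset.univ.erase S, (if v ∈ x.1 then h x else 0) := by
          refine Finset.sum_congr rfl fun x hx => ?_
          simp [h', Finset.ne_of_mem_erase hx]
        rw [this]
        by_cases hv : v ∈ S.1 <;> simp [h', hv]
      have hgh : g' = h' := by
        apply ih
        · have c1 : (Finset.univ.filter (fun s => g' s ≠ 0)).card < 
              (Finset.univ.filter (fun s => g s ≠ 0)).card := by
            apply Finset.card_lt_card
            rw [Finset.ssubset_iff_of_subset]
            · exact ⟨S, by simpa using hS, by simp [g']⟩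
            · intro s; simpa using sg s
          have c2 : (Finset.univ.filter (fun s => h' s ≠ 0)).card ≤ 
              (Finset.univ.filter (fun s => h s ≠ 0)).card := by
            apply Finset.card_le_card
            intro s; simpa using sh s
          omega
        · intro s; by_cases e : s = S
          · subst e; simp [g']
          · simpa [g', e] using hg s
        · intro s; by_cases e : s = S
          · subst e; simpa [h'] using hle
          · simpa [h', e] using hh s
        · exact fun s t h1 h2 => cg s t (sg s h1) (sg t h2)
        · exact fun s t h1 h2 => ch s t (sh s h1) (sh t h2)
        · intro v; rw [sumg, sumh, hs v]
      ext s
      have := congrFun hgh s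
      by_cases e : s = S
      · subst e; simp [g', h'] at this; linarith
      · simpa [g', h', e] using this
    intro g h hc hg hh cg ch hs
    by_cases g0 : g = 0
    · subst g0
      ext s
      by_contra hne
      obtain ⟨v, hv⟩ := s.2.1
      have := (key0 h hh v).2 ⟨s, fun e => hne (by simp [e]), hv⟩
      rw [← hs v] at this
      simp at this
    by_cases h0 : h = 0
    · subst h0
      ext s
      by_contra hne
      obtain ⟨v, hv⟩ := s.2.1
      have := (key0 g hg v).2 ⟨s, fun e => hne (by simp [e]), hv⟩
      rw [hs v] at this
      simp at this
    obtain ⟨S, hS, hS'⟩ := keytop g cg g0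
    obtain ⟨T, hT, hT'⟩ := keytop h ch h0
    have hST : S = T := by
      apply le_antisymm
      · intro v hv
        have := (key0 g hg v).2 ⟨S, hS, hv⟩
        rw [hs v] at this
        obtain ⟨s, h1, h2⟩ := (key0 h hh v).1 this
        exact hT' s h1 h2
      · intro v hv
        have := (key0 h hh v).2 ⟨T, hT, hv⟩
        rw [← hs v] at this
        obtain ⟨s, h1, h2⟩ := (key0 g hg v).1 this
        exact hS' s h1 h2
    subst hST
    rcases le_total (g S) (h S) with hle | hle
    · exact main g h hc hg hh cg ch hs S hS hle
    · exact (main h g (by omega) hh hg ch cg (fun v => (hs v).symm) S hT hle).symm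

open Classical in
/-- The comparison map from the realization to functions on vertices. -/
def psi (q : (SSet.toTop.obj (nerve (IndPoset G)) : TopCat)) : V → ℝ :=
  fun v => ev (fun s : IndPoset G => if v ∈ s.1 then 1 else 0) q

lemma psi_continuous : Continuous (psi G) :=
  continuous_pi fun _ => (ev _).continuous

open Classical in
lemma psi_RR {n : ℕ} (c : Fin (n + 1) →o IndPoset G) (a) (v) : 
    psi G (RR c a) v = ∑ i, if v ∈ (c i).1 then a i else 0 := by
  unfold psi
  rw [ev_RR]
  simp

open Classical in
lemma psi_injective : Function.Injective (psi G) := by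
  intro q q' h
  have hsum : ∀ (q : (SSet.toTop.obj (nerve (IndPoset G)) : TopCat)) v, psi G q v = 
      ∑ s : IndPoset G, if v ∈ s.1 then ev (Pi.single s 1) q else 0 := by
    intro q v
    unfold psi
    rw [ev_eq_sum]
    refine Finset.sum_congr rfl fun s _ => ?_
    split_ifs <;> simp
  have hnn : ∀ (q : (SSet.toTop.obj (nerve (IndPoset G)) : TopCat)) (s : IndPoset G), 
      0 ≤ ev (Pi.single s 1) q := by
    intro q s
    obtain ⟨n, c, a, rfl⟩ := RR_surj q
    rw [ev_RR]
    refine Finset.sum_nonneg fun i _ => mul_nonneg (stdSimplex.zero_le a i) ?_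
    by_cases e : c i = s
    · subst e; simp
    · rw [Pi.single_eq_of_ne e]
  have hch : ∀ (q : (SSet.toTop.obj (nerve (IndPoset G)) : TopCat)) (s t : IndPoset G), 
      ev (Pi.single s 1) q ≠ 0 → ev (Pi.single t 1) q ≠ 0 → s ≤ t ∨ t ≤ s := by
    intro q s t
    obtain ⟨n, c, a, rfl⟩ := RR_surj q
    have : ∀ s : IndPoset G, ev (Pi.single s 1) (RR c a) ≠ 0 → ∃ i, c i = s := by
      intro s hs
      rw [ev_RR] at hs
      obtain ⟨i, _, hi⟩ := Finset.exists_ne_zero_of_sum_ne_zero hs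
      refine ⟨i, ?_⟩
      by_contra hne
      rw [Pi.single_eq_of_ne hne, mul_zero] at hi
      exact hi rfl
    intro hs ht
    obtain ⟨i, rfl⟩ := this s hs
    obtain ⟨j, rfl⟩ := this t ht
    exact (le_total i j).imp (fun h => c.monotone h) (fun h => c.monotone h)
  apply ev_injective
  intro s
  exact congrFun (chain_inj_aux G _ (fun s => ev (Pi.single s 1) q) 
    (fun s => ev (Pi.single s 1) q') le_rfl (hnn q) (hnn q') (hch q) (hch q')
    (fun v => by rw [← hsum, ← hsum, h])) s

open Classical in
lemma psi_mem (q) : psi G q ∈ indCone G ∧ ‖psi G q‖ = 1 := by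
  obtain ⟨n, c, a, rfl⟩ := RR_surj q
  have hnn : ∀ v, 0 ≤ psi G (RR c a) v := by
    intro v
    rw [psi_RR]
    exact Finset.sum_nonneg fun i _ => by split_ifs; exacts [stdSimplex.zero_le a i, le_rfl]
  refine ⟨⟨hnn, ?_⟩, ?_⟩
  · intro v w hvw
    have : ∀ v, psi G (RR c a) v ≠ 0 → ∃ i, v ∈ (c i).1 := by
      intro v hv
      rw [psi_RR] at hv
      obtain ⟨i, _, hi⟩ := Finset.exists_ne_zero_of_sum_ne_zero hv
      refine ⟨i, ?_⟩
      by_contra hne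
      simp [hne] at hi
    by_contra hne
    obtain ⟨i, hi⟩ := this v (left_ne_zero_of_mul hne)
    obtain ⟨j, hj⟩ := this w (right_ne_zero_of_mul hne)
    rcases le_total i j with h | h
    · exact (c j).2.2 v (c.monotone h hi) w hj hvw
    · exact (c i).2.2 v hi w (c.monotone h hj) hvw
  · apply le_antisymm
    · rw [pi_norm_le_iff_of_nonneg zero_le_one]
      intro v
      rw [Real.norm_of_nonneg (hnn v), psi_RR, ← stdSimplex.sum_eq_one a]
      exact Finset.sum_le_sum fun i _ => by split_ifs; exacts [le_rfl, stdSimplex.zero_le a i]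
    · obtain ⟨v, hv⟩ := (c 0).2.1
      refine le_trans ?_ (norm_le_pi_norm _ v)
      rw [Real.norm_of_nonneg (hnn v), psi_RR, ← stdSimplex.sum_eq_one a]
      apply le_of_eq
      refine Finset.sum_congr rfl fun i _ => ?_
      rw [if_pos (c.monotone (Fin.zero_le i) hv)]

open Classical in
lemma layer_cake : ∀ (N : ℕ) (f : V → ℝ) (_ : (Finset.univ.filter (fun v => f v ≠ 0)).card ≤ N)
    (_ : f ∈ indCone G) (_ : f ≠ 0),
    ∃ (n : ℕ) (c : Fin (n + 1) →o IndPoset G) (a : Fin (n + 1) → ℝ), (∀ i, 0 ≤ a i) ∧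
      (∀ v, f v = ∑ i, if v ∈ (c i).1 then a i else 0) ∧ 
      (c (Fin.last n)).1 = (Finset.univ.filter (fun v => f v ≠ 0)) := by
  intro N
  induction N with
  | zero =>
    intro f hN _ h0
    exfalso
    apply h0
    ext v
    have := Finset.filter_eq_empty_iff.1 (Finset.card_eq_zero.1 (Nat.le_zero.1 hN)) (Finset.mem_univ v)
    simpa using this
  | succ N ih =>
    intro f hN hf h0
    obtain ⟨v0, hv0⟩ := Function.ne_iff.1 h0
    let S := Finset.univ.filter (fun v => f v ≠ 0)
    have hSn : S.Nonempty := ⟨v0, by simpa [S] using hv0⟩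
    obtain ⟨u, hu, hmin⟩ := S.exists_min_image f hSn
    have hu0 : f u ≠ 0 := by simpa [S] using hu
    have hupos : 0 < f u := lt_of_le_of_ne (hf.1 u) (Ne.symm hu0)
    let SS : IndPoset G := ⟨S, hSn, fun x hx y hy hxy => by
      have h1 : f x ≠ 0 := by simpa [S] using hx
      have h2 : f y ≠ 0 := by simpa [S] using hy
      exact mul_ne_zero h1 h2 (hf.2 x y hxy)⟩
    let f' : V → ℝ := fun v => f v - if v ∈ S then f u else 0
    have hff : ∀ v, f' v ≠ 0 → f v ≠ 0 := by
      intro v hv hv0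
      apply hv
      have : v ∉ S := by simpa [S] using hv0
      simp [f', this, hv0]
    have hf'nn : ∀ v, 0 ≤ f' v := by
      intro v
      by_cases hv : v ∈ S
      · simpa [f', hv] using hmin v hv
      · simpa [f', hv] using hf.1 v
    by_cases hz : f' = 0
    · refine ⟨0, ⟨fun _ => SS, fun _ _ _ => le_rfl⟩, fun _ => f u, fun _ => hupos.le, ?_, rfl⟩
      intro v
      have := congrFun hz v
      simp only [f', Pi.zero_apply] at this
      rw [Fin.sum_univ_one]
      exact sub_eq_zero.1 this
    · obtain ⟨n, c, a, h1, h2, h3⟩ := ih f' (by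
        have : (Finset.univ.filter (fun v => f' v ≠ 0)).card < S.card := by
          apply Finset.card_lt_card
          rw [Finset.ssubset_iff_of_subset]
          · exact ⟨u, hu, by simp [f', hu]⟩
          · intro s; simpa [S] using hff s
        have h2 : S.card ≤ N + 1 := hN
        omega) ⟨hf'nn, fun v w hvw => by
          by_contra hne
          exact mul_ne_zero (hff v (left_ne_zero_of_mul hne)) (hff w (right_ne_zero_of_mul hne))
            (hf.2 v w hvw)⟩ hz
      refine ⟨n + 1, ⟨Fin.snoc (α := fun _ => IndPoset G) c SS, ?_⟩, Fin.snoc (α := fun _ => ℝ) a (f u), ?_, ?_, ?_⟩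
      · rw [Fin.monotone_iff_le_succ]
        intro i
        refine Fin.lastCases ?_ (fun i => ?_) i
        · rw [Fin.succ_last, Fin.snoc_last, Fin.snoc_castSucc]
          intro v hv
          rw [h3] at hv
          have : f' v ≠ 0 := by simpa using hv
          simpa [SS, S] using hff v this
        · rw [Fin.succ_castSucc, Fin.snoc_castSucc, Fin.snoc_castSucc]
          exact c.monotone (Fin.castSucc_lt_succ (i := i)).le
      · intro i
        refine Fin.lastCases ?_ (fun i => ?_) i
        · rw [Fin.snoc_last]; exact hupos.le
        · rw [Fin.snoc_castSucc]; exact h1 i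
      · intro v
        rw [Fin.sum_univ_castSucc]
        simp only [OrderHom.coe_mk, Fin.snoc_castSucc, Fin.snoc_last]
        rw [← h2 v]
        simp [f', SS]
      · change (Fin.snoc (α := fun _ => IndPoset G) c SS (Fin.last (n + 1))).1 = S
        rw [Fin.snoc_last]

open Classical in
lemma psi_surj (f : V → ℝ) (hf : f ∈ indCone G) (h1 : ‖f‖ = 1) : ∃ q, psi G q = f := by
  have h0 : f ≠ 0 := by rintro rfl; simp at h1
  obtain ⟨n, c, a, ha, hs, -⟩ := layer_cake G _ f le_rfl hf h0
  have hsum : ∑ i, a i = 1 := by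
    rw [← h1]
    apply le_antisymm
    · obtain ⟨v, hv⟩ := (c 0).2.1
      refine le_trans ?_ (norm_le_pi_norm _ v)
      rw [Real.norm_of_nonneg (hf.1 v), hs]
      apply le_of_eq
      refine Finset.sum_congr rfl fun i _ => ?_
      rw [if_pos (c.monotone (Fin.zero_le i) hv)]
    · rw [pi_norm_le_iff_of_nonneg (Finset.sum_nonneg fun i _ => ha i)]
      intro v
      rw [Real.norm_of_nonneg (hf.1 v), hs]
      exact Finset.sum_le_sum fun i _ => by split_ifs; exacts [le_rfl, ha i]
  refine ⟨RR c ⟨a, ha, hsum⟩, ?_⟩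
  ext v
  rw [psi_RR, hs]
  rfl

/-- The realization is homeomorphic to the unit sphere (for the sup norm) of the cone. -/
def indHomeo : (indComplex G) ≃ₜ {f : V → ℝ // f ∈ indCone G ∧ ‖f‖ = 1} := by
  haveI : CompactSpace (indComplex G) := nerve_compact (P := IndPoset G)
  refine Continuous.homeoOfEquivCompactToT2 
    (f := Equiv.ofBijective (fun q : indComplex G => ⟨psi G q, psi_mem G q⟩) ⟨?_, ?_⟩) ?_
  · intro q q' h
    exact psi_injective G (congrArg Subtype.val h)
  · rintro ⟨f, hf, h1⟩
    obtain ⟨q, hq⟩ := psi_surj G f hf h1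
    exact ⟨q, Subtype.ext hq⟩
  · exact (psi_continuous G).subtype_mk _

end IndReal

noncomputable section Cones
open scoped unitInterval

/-- A map which vanishes exactly at zero. -/
def ZP {X Y : Type} [TopologicalSpace X] [TopologicalSpace Y] [Zero X] [Zero Y]
    (f : C(X, Y)) : Prop := ∀ x, f x = 0 ↔ x = 0

/-- Homotopy equivalence through maps vanishing exactly at zero. -/
def CE (X Y : Type) [TopologicalSpace X] [TopologicalSpace Y] [Zero X] [Zero Y] : Prop :=
  ∃ F : C(X, Y), ∃ G : C(Y, X), ZP F ∧ ZP G ∧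
    Nonempty (ContinuousMap.HomotopyWith (ContinuousMap.id X) (G.comp F) ZP) ∧
    Nonempty (ContinuousMap.HomotopyWith (ContinuousMap.id Y) (F.comp G) ZP)

theorem CE.mk' {X Y : Type} [TopologicalSpace X] [TopologicalSpace Y] [Zero X] [Zero Y]
    (F : X → Y) (G : Y → X) (H : I × X → X) (K : I × Y → Y)
    (hF : Continuous F) (hG : Continuous G) (hH : Continuous H) (hK : Continuous K)
    (zF : ∀ x, F x = 0 ↔ x = 0) (zG : ∀ x, G x = 0 ↔ x = 0)
    (zH : ∀ t x, H (t, x) = 0 ↔ x = 0) (zK : ∀ t x, K (t, x) = 0 ↔ x = 0)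
    (H0 : ∀ x, H (0, x) = x) (H1 : ∀ x, H (1, x) = G (F x))
    (K0 : ∀ x, K (0, x) = x) (K1 : ∀ x, K (1, x) = F (G x)) : CE X Y :=
  ⟨⟨F, hF⟩, ⟨G, hG⟩, zF, zG,
    ⟨{ toFun := H, continuous_toFun := hH, map_zero_left := H0, map_one_left := H1,
       prop' := fun t x => zH t x }⟩,
    ⟨{ toFun := K, continuous_toFun := hK, map_zero_left := K0, map_one_left := K1,
       prop' := fun t x => zK t x }⟩⟩

theorem zp_apply {X Y : Type} [TopologicalSpace X] [TopologicalSpace Y] [Zero X] [Zero Y]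
    {f g : C(X, Y)} (H : ContinuousMap.HomotopyWith f g ZP) (t : I) (x : X) :
    H (t, x) = 0 ↔ x = 0 := H.prop' t x

theorem zh_conj {X Y Z : Type} [TopologicalSpace X] [TopologicalSpace Y] [TopologicalSpace Z]
    [Zero X] [Zero Y] [Zero Z]
    (F : C(X, Y)) (G : C(Y, Z)) {f g : C(Y, Y)} (hF : ZP F) (hG : ZP G)
    (H : ContinuousMap.HomotopyWith f g ZP) :
    Nonempty (ContinuousMap.HomotopyWith (G.comp (f.comp F)) (G.comp (g.comp F)) ZP) :=
  ⟨{ toFun := fun p => G (H (p.1, F p.2))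
     continuous_toFun := by fun_prop
     map_zero_left := fun x => by simp
     map_one_left := fun x => by simp
     prop' := fun t x => (hG _).trans ((zp_apply H t _).trans (hF x)) }⟩

theorem CE.trans {X Y Z : Type} [TopologicalSpace X] [TopologicalSpace Y] [TopologicalSpace Z]
    [Zero X] [Zero Y] [Zero Z] (h : CE X Y) (h' : CE Y Z) : CE X Z := by
  obtain ⟨F, G, zF, zG, ⟨H⟩, ⟨K⟩⟩ := h
  obtain ⟨F', G', zF', zG', ⟨H'⟩, ⟨K'⟩⟩ := h'
  obtain ⟨A⟩ := zh_conj F G zF zG H'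
  obtain ⟨B⟩ := zh_conj G' F' zG' zF' K
  refine ⟨F'.comp F, G.comp G', fun x => (zF' _).trans (zF x), fun x => (zG _).trans (zG' x),
    ⟨H.trans A⟩, ⟨K'.trans B⟩⟩

theorem CE.symm {X Y : Type} [TopologicalSpace X] [TopologicalSpace Y]
    [Zero X] [Zero Y] (h : CE X Y) : CE Y X := by
  obtain ⟨F, G, zF, zG, H, K⟩ := h
  exact ⟨G, F, zG, zF, K, H⟩

theorem CE.prodR {X Y : Type} [TopologicalSpace X] [TopologicalSpace Y]
    [Zero X] [Zero Y] (h : CE X Y) : CE (X × ℝ) (Y × ℝ) := by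
  obtain ⟨F, G, zF, zG, ⟨H⟩, ⟨K⟩⟩ := h
  refine CE.mk' (fun p => (F p.1, p.2)) (fun p => (G p.1, p.2))
    (fun q => (H (q.1, q.2.1), q.2.2)) (fun q => (K (q.1, q.2.1), q.2.2))
    (by fun_prop) (by fun_prop) (by fun_prop) (by fun_prop) ?_ ?_ ?_ ?_ ?_ ?_ ?_ ?_
  · intro x; simp [Prod.ext_iff, zF x.1]
  · intro x; simp [Prod.ext_iff, zG x.1]
  · intro t x; simp [Prod.ext_iff, zp_apply H t x.1]
  · intro t x; simp [Prod.ext_iff, zp_apply K t x.1]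
  all_goals intro x; simp

theorem CE.ofHomeo {X Y : Type} [TopologicalSpace X] [TopologicalSpace Y]
    [Zero X] [Zero Y] (e : X ≃ₜ Y) (h : e 0 = 0) : CE X Y := by
  have z1 : ∀ x, e x = 0 ↔ x = 0 := fun x => by rw [← h]; exact e.injective.eq_iff
  refine CE.mk' e e.symm Prod.snd Prod.snd e.continuous e.symm.continuous continuous_snd
    continuous_snd z1 ?_ (fun _ _ => Iff.rfl) (fun _ _ => Iff.rfl) (fun _ => rfl)
    (fun x => (e.symm_apply_apply x).symm) (fun _ => rfl) (fun x => (e.apply_symm_apply x).symm)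
  intro y
  rw [← z1, e.apply_symm_apply]

theorem CE.ofFinrank {X Y : Type} [NormedAddCommGroup X] [NormedSpace ℝ X]
    [NormedAddCommGroup Y] [NormedSpace ℝ Y] [FiniteDimensional ℝ X] [FiniteDimensional ℝ Y]
    (h : Module.finrank ℝ X = Module.finrank ℝ Y) : CE X Y :=
  CE.ofHomeo (ContinuousLinearEquiv.ofFinrankEq h).toHomeomorph (by simp)

theorem CE.homotopyEquiv {X Y : Type} [TopologicalSpace X] [TopologicalSpace Y]
    [Zero X] [Zero Y] (h : CE X Y) :
    Nonempty (ContinuousMap.HomotopyEquiv {x : X // x ≠ 0} {y : Y // y ≠ 0}) := by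
  obtain ⟨F, G, zF, zG, ⟨H⟩, ⟨K⟩⟩ := h
  refine ⟨⟨⟨fun x => ⟨F x.1, fun h => x.2 ((zF _).1 h)⟩, by fun_prop⟩,
    ⟨fun x => ⟨G x.1, fun h => x.2 ((zG _).1 h)⟩, by fun_prop⟩, ?_, ?_⟩⟩
  · refine ContinuousMap.Homotopic.symm ⟨
      { toFun := fun p => ⟨H (p.1, p.2.1), fun h => p.2.2 ((zp_apply H _ _).1 h)⟩
        continuous_toFun := by fun_prop
        map_zero_left := fun x => by simp
        map_one_left := fun x => by simp }⟩
  · refine ContinuousMap.Homotopic.symm ⟨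
      { toFun := fun p => ⟨K (p.1, p.2.1), fun h => p.2.2 ((zp_apply K _ _).1 h)⟩
        continuous_toFun := by fun_prop
        map_zero_left := fun x => by simp
        map_one_left := fun x => by simp }⟩

/-- The unit sphere of a cone is homotopy equivalent to the punctured cone. -/
theorem sphere_cone {E : Type} [NormedAddCommGroup E] [NormedSpace ℝ E] (C : Set E)
    (hC : ∀ x ∈ C, ∀ r : ℝ, 0 < r → r • x ∈ C) :
    Nonempty (ContinuousMap.HomotopyEquiv {x : E // x ∈ C ∧ ‖x‖ = 1}
      {x : E // x ∈ C ∧ x ≠ 0}) := by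
  have hn : ∀ x : {x : E // x ∈ C ∧ x ≠ 0}, 0 < ‖x.1‖ := fun x => norm_pos_iff.2 x.2.2
  have pos : ∀ (t : I) (x : {x : E // x ∈ C ∧ x ≠ 0}), 0 < (1 - (t : ℝ)) * ‖x.1‖⁻¹ + t := by
    intro t x
    have h1 := inv_pos.2 (hn x)
    rcases t.2.1.eq_or_lt with h | h
    · rw [← h]; simpa using hn x
    · have := mul_nonneg (sub_nonneg.2 t.2.2) h1.le
      linarith
  refine ⟨⟨⟨fun x => ⟨x.1, x.2.1, fun h => by simpa [h] using x.2.2⟩, by fun_prop⟩,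
    ⟨fun x => ⟨‖x.1‖⁻¹ • x.1, hC _ x.2.1 _ (inv_pos.2 (hn x)), by
      rw [norm_smul, norm_inv, norm_norm, inv_mul_cancel₀ (hn x).ne']⟩, ?_⟩, ?_, ?_⟩⟩
  · refine Continuous.subtype_mk (Continuous.smul (Continuous.inv₀ (by fun_prop) ?_) (by fun_prop)) _
    exact fun x => (hn x).ne'
  · have : ∀ f g : C({x : E // x ∈ C ∧ ‖x‖ = 1}, {x : E // x ∈ C ∧ ‖x‖ = 1}), f = g →
      f.Homotopic g := fun f g h => h ▸ ContinuousMap.Homotopic.refl _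
    apply this
    ext x
    simp [x.2.2]
  · refine ⟨
      { toFun := fun p => ⟨((1 - (p.1 : ℝ)) * ‖p.2.1‖⁻¹ + p.1) • p.2.1, 
          hC _ p.2.2.1 _ (pos _ _), smul_ne_zero (pos _ _).ne' p.2.2.2⟩
        continuous_toFun := ?_
        map_zero_left := fun x => by simp
        map_one_left := fun x => by simp }⟩
    refine Continuous.subtype_mk (Continuous.smul (Continuous.add (Continuous.mul (by fun_prop) 
      (Continuous.inv₀ (by fun_prop) ?_)) (by fun_prop)) (by fun_prop)) _
    exact fun x => (hn _).ne'

end Cones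

noncomputable section Cycles
open scoped unitInterval

/-- The cone over the independence complex of the cycle of length `t`. -/
def YtSet (t : ℕ) : Set (ℕ → ℝ) :=
  {f | (∀ i, 0 ≤ f i) ∧ (∀ i, t ≤ i → f i = 0) ∧ (∀ i, f i * f (i + 1) = 0) ∧
    f 0 * f (t - 1) = 0}

/-- The subtype of `YtSet`. -/
abbrev Yt (t : ℕ) : Type := YtSet t

instance (t : ℕ) : Zero (Yt t) := ⟨⟨0, by simp [YtSet]⟩⟩

theorem Yt.eq_zero {t : ℕ} {f : ℕ → ℝ} (h : f ∈ YtSet t) :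
    ((⟨f, h⟩ : Yt t) = 0) ↔ ∀ i, f i = 0 := by
  constructor
  · intro h i
    exact congrFun (congrArg Subtype.val h) i
  · intro h
    exact Subtype.ext (funext h)

theorem Yt.eq_zero' {t : ℕ} (f : Yt t) : f = 0 ↔ ∀ i, f.1 i = 0 := Yt.eq_zero f.2

/-- Change five values. -/
def upd5 (n : ℕ) (p0 p1 p2 p3 p4 : ℝ) (f : ℕ → ℝ) (i : ℕ) : ℝ :=
  if i = 0 then p0 else if i = n + 1 then p1 else if i = n + 2 then p2 else
  if i = n + 3 then p3 else if i = n + 4 then p4 else f i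

/-- Change two values and truncate. -/
def upd2 (n : ℕ) (p0 p1 : ℝ) (f : ℕ → ℝ) (i : ℕ) : ℝ :=
  if i = 0 then p0 else if i = n + 1 then p1 else if i < n + 2 then f i else 0

theorem mul_zero_of_le {a b c d : ℝ} (ha : 0 ≤ a) (hb : 0 ≤ b) (hac : a ≤ c) (hbd : b ≤ d)
    (h : c * d = 0) : a * b = 0 :=
  le_antisymm (h ▸ mul_le_mul hac hbd hb (ha.trans hac)) (mul_nonneg ha hb)

theorem upd5_mem {n : ℕ} {p0 p1 p2 p3 p4 : ℝ} {f : ℕ → ℝ} (h0 : 0 ≤ p0) (h1 : 0 ≤ p1)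
    (h2 : 0 ≤ p2) (h3 : 0 ≤ p3) (h4 : 0 ≤ p4) (l0 : p0 ≤ f 0) (l1 : p1 ≤ f (n + 1))
    (h12 : p1 * p2 = 0) (h23 : p2 * p3 = 0) (h34 : p3 * p4 = 0) (h40 : p4 * p0 = 0)
    (hf : ∀ i, 0 ≤ f i) (hz : ∀ i, n + 5 ≤ i → f i = 0) (hp : ∀ i, f i * f (i + 1) = 0) :
    upd5 n p0 p1 p2 p3 p4 f ∈ YtSet (n + 5) := by
  have nn : ∀ i, 0 ≤ upd5 n p0 p1 p2 p3 p4 f i := by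
    intro i
    unfold upd5
    split_ifs <;> first | assumption | exact hf _
  have le : ∀ i, i < n + 2 → upd5 n p0 p1 p2 p3 p4 f i ≤ f i := by
    intro i hi
    unfold upd5
    split_ifs <;> first | omega | (subst_vars; first | assumption | exact le_rfl)
  refine ⟨nn, ?_, ?_, ?_⟩
  · intro i hi
    unfold upd5
    split_ifs <;> first | omega | exact hz i hi
  · intro i
    by_cases hi : i + 1 < n + 2
    · exact mul_zero_of_le (nn _) (nn _) (le _ (by omega)) (le _ hi) (hp i)
    · by_cases e1 : i = n + 1
      · subst e1; simpa [upd5] using h12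
      by_cases e2 : i = n + 2
      · subst e2; simpa [upd5] using h23
      by_cases e3 : i = n + 3
      · subst e3; simpa [upd5] using h34
      have : upd5 n p0 p1 p2 p3 p4 f (i + 1) = 0 := by
        rw [upd5, if_neg (by omega), if_neg (by omega), if_neg (by omega), if_neg (by omega),
          if_neg (by omega)]
        exact hz (i + 1) (by omega)
      rw [this, mul_zero]
  · have : n + 5 - 1 = n + 4 := by omega
    rw [this]
    simpa [upd5, mul_comm] using h40

theorem upd2_mem {n : ℕ} {p0 p1 : ℝ} {f : ℕ → ℝ} (h0 : 0 ≤ p0) (h1 : 0 ≤ p1)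
    (l0 : p0 ≤ f 0) (l1 : p1 ≤ f (n + 1)) (h01 : p0 * p1 = 0)
    (hf : ∀ i, 0 ≤ f i) (hp : ∀ i, f i * f (i + 1) = 0) :
    upd2 n p0 p1 f ∈ YtSet (n + 2) := by
  have nn : ∀ i, 0 ≤ upd2 n p0 p1 f i := by
    intro i
    unfold upd2
    split_ifs <;> first | assumption | (exact le_rfl) | exact hf _
  have le : ∀ i, upd2 n p0 p1 f i ≤ f i := by
    intro i
    unfold upd2
    split_ifs <;> first | (subst_vars; first | assumption | (exact le_rfl) | exact hf _)
  refine ⟨nn, ?_, ?_, ?_⟩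
  · intro i hi
    unfold upd2
    split_ifs <;> first | omega | rfl
  · intro i
    exact mul_zero_of_le (nn _) (nn _) (le _) (le _) (hp i)
  · have : n + 2 - 1 = n + 1 := by omega
    rw [this]
    simpa [upd2] using h01

theorem upd5_continuous {X : Type} [TopologicalSpace X] (n : ℕ) {p0 p1 p2 p3 p4 : X → ℝ}
    {f : X → ℕ → ℝ} (h0 : Continuous p0) (h1 : Continuous p1) (h2 : Continuous p2)
    (h3 : Continuous p3) (h4 : Continuous p4) (hf : ∀ i, Continuous fun x => f x i) :
    Continuous fun x => upd5 n (p0 x) (p1 x) (p2 x) (p3 x) (p4 x) (f x) := by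
  refine continuous_pi fun i => ?_
  unfold upd5
  split_ifs <;> first | assumption | exact hf i

theorem upd2_continuous {X : Type} [TopologicalSpace X] (n : ℕ) {p0 p1 : X → ℝ}
    {f : X → ℕ → ℝ} (h0 : Continuous p0) (h1 : Continuous p1)
    (hf : ∀ i, Continuous fun x => f x i) :
    Continuous fun x => upd2 n (p0 x) (p1 x) (f x) := by
  refine continuous_pi fun i => ?_
  unfold upd2
  split_ifs <;> first | assumption | (exact continuous_const) | exact hf i

theorem upd5_eq_zero {n : ℕ} {p0 p1 p2 p3 p4 : ℝ} {f : ℕ → ℝ} :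
    (∀ i, upd5 n p0 p1 p2 p3 p4 f i = 0) ↔ p0 = 0 ∧ p1 = 0 ∧ p2 = 0 ∧ p3 = 0 ∧ p4 = 0 ∧
      ∀ i, i ≠ 0 → i ≠ n + 1 → i ≠ n + 2 → i ≠ n + 3 → i ≠ n + 4 → f i = 0 := by
  constructor
  · intro h
    refine ⟨by simpa [upd5] using h 0, by simpa [upd5] using h (n + 1),
      by simpa [upd5] using h (n + 2), by simpa [upd5] using h (n + 3),
      by simpa [upd5] using h (n + 4), fun i a b c d e => ?_⟩
    simpa [upd5, a, b, c, d, e] using h i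
  · rintro ⟨h0, h1, h2, h3, h4, h⟩ i
    unfold upd5
    split_ifs <;> first | assumption | exact h i ‹_› ‹_› ‹_› ‹_› ‹_›

theorem upd2_eq_zero {n : ℕ} {p0 p1 : ℝ} {f : ℕ → ℝ} :
    (∀ i, upd2 n p0 p1 f i = 0) ↔ p0 = 0 ∧ p1 = 0 ∧
      ∀ i, i ≠ 0 → i ≠ n + 1 → i < n + 2 → f i = 0 := by
  constructor
  · intro h
    refine ⟨by simpa [upd2] using h 0, by simpa [upd2] using h (n + 1), fun i a b c => ?_⟩
    simpa [upd2, a, b, c] using h i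
  · rintro ⟨h0, h1, h⟩ i
    unfold upd2
    split_ifs <;> first | assumption | rfl | exact h i ‹_› ‹_› ‹_›

/-- Products at the last places. -/
theorem Yt.prods {n : ℕ} {f : ℕ → ℝ} (h : f ∈ YtSet (n + 5)) :
    0 ≤ f 0 ∧ 0 ≤ f (n + 1) ∧ 0 ≤ f (n + 2) ∧ 0 ≤ f (n + 3) ∧ 0 ≤ f (n + 4) ∧
    (f (n + 1) = 0 ∨ f (n + 2) = 0) ∧ (f (n + 2) = 0 ∨ f (n + 3) = 0) ∧
    (f (n + 3) = 0 ∨ f (n + 4) = 0) ∧ (f 0 = 0 ∨ f (n + 4) = 0) := by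
  refine ⟨h.1 _, h.1 _, h.1 _, h.1 _, h.1 _, ?_, ?_, ?_, ?_⟩
  · exact mul_eq_zero.1 (h.2.2.1 (n + 1))
  · exact mul_eq_zero.1 (h.2.2.1 (n + 2))
  · exact mul_eq_zero.1 (h.2.2.1 (n + 3))
  · exact mul_eq_zero.1 h.2.2.2

theorem Yt.prods2 {n : ℕ} {f : ℕ → ℝ} (h : f ∈ YtSet (n + 2)) :
    0 ≤ f 0 ∧ 0 ≤ f (n + 1) ∧ (f 0 = 0 ∨ f (n + 1) = 0) :=
  ⟨h.1 _, h.1 _, mul_eq_zero.1 h.2.2.2⟩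

section Step
variable (n : ℕ)

/-- forward map -/
def stepF (f : Yt (n + 5)) : Yt (n + 2) × ℝ :=
  (⟨upd2 n (max (f.1 0 - f.1 (n + 1)) 0) (max (f.1 (n + 1) - f.1 0) 0) f.1, by
    obtain ⟨h0, h1, -⟩ := Yt.prods f.2
    refine upd2_mem (le_max_right _ _) (le_max_right _ _) ?_ ?_ ?_ f.2.1 f.2.2.2.1
    · grind
    · grind
    · rw [mul_eq_zero]; grind⟩,
  f.1 (n + 3) + min (f.1 0) (f.1 (n + 1)) - f.1 (n + 2) - f.1 (n + 4))

/-- backward map -/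
def stepG (p : Yt (n + 2) × ℝ) : Yt (n + 5) :=
  ⟨upd5 n (max (p.1.1 0 - max (-p.2) 0) 0) (max (p.1.1 (n + 1) - max (-p.2) 0) 0)
    (max (max (-p.2) 0 - p.1.1 (n + 1)) 0) (max p.2 0) (max (max (-p.2) 0 - p.1.1 0) 0) p.1.1, by
    obtain ⟨h0, h1, -⟩ := Yt.prods2 p.1.2
    refine upd5_mem (le_max_right _ _) (le_max_right _ _) (le_max_right _ _) (le_max_right _ _)
      (le_max_right _ _) ?_ ?_ ?_ ?_ ?_ ?_ p.1.2.1 (fun i hi => p.1.2.2.1 i (by omega)) p.1.2.2.2.1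
    · grind
    · grind
    all_goals rw [mul_eq_zero]; grind⟩

/-- left homotopy -/
def stepH (q : I × Yt (n + 5)) : Yt (n + 5) :=
  ⟨upd5 n
    (max (q.2.1 0 - q.2.1 (n + 4) - q.1 * (q.2.1 (n + 2) + min (q.2.1 0) (q.2.1 (n + 1)))) 0)
    (max (q.2.1 (n + 1) - q.2.1 (n + 2) - q.1 * (q.2.1 (n + 4) + min (q.2.1 0) (q.2.1 (n + 1)))) 0)
    (max (-(q.2.1 (n + 1) - q.2.1 (n + 2) -
      q.1 * (q.2.1 (n + 4) + min (q.2.1 0) (q.2.1 (n + 1))))) 0)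
    (q.2.1 (n + 3) + q.1 * min (q.2.1 0) (q.2.1 (n + 1)))
    (max (-(q.2.1 0 - q.2.1 (n + 4) -
      q.1 * (q.2.1 (n + 2) + min (q.2.1 0) (q.2.1 (n + 1))))) 0) q.2.1, by
    obtain ⟨⟨τ, t0, t1⟩, f⟩ := q
    obtain ⟨h0, h1, h2, h3, h4, d⟩ := Yt.prods f.2
    have hm : 0 ≤ min (f.1 0) (f.1 (n + 1)) := le_min h0 h1
    have hm0 : min (f.1 0) (f.1 (n + 1)) ≤ f.1 0 := min_le_left _ _
    have hm1 : min (f.1 0) (f.1 (n + 1)) ≤ f.1 (n + 1) := min_le_right _ _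
    have a0 : (min (f.1 0) (f.1 (n + 1)) = 0) ∨ (f.1 (n + 2) = 0 ∧ f.1 (n + 4) = 0) := by grind
    dsimp only
    generalize min (f.1 0) (f.1 (n + 1)) = m at *
    have e1 := mul_nonneg t0 hm
    have e1' := mul_nonneg (sub_nonneg.2 t1) hm
    have e2 := mul_nonneg t0 h2
    have e3 := mul_nonneg t0 h4
    refine upd5_mem (le_max_right _ _) (le_max_right _ _) (le_max_right _ _) (by linarith)
      (le_max_right _ _) ?_ ?_ ?_ ?_ ?_ ?_ f.2.1 f.2.2.1 f.2.2.2.1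
    · exact max_le (by linarith) h0
    · exact max_le (by linarith) h1
    · rw [mul_eq_zero]; grind
    · rcases a0 with h | ⟨h, h'⟩
      · rcases d.2.1 with h5 | h5
        · rcases d.2.2.1 with h6 | h6
          · simp [h6, h]
          · rw [h5, h6, h, max_eq_right (by simpa using h1), zero_mul]
        · simp [h5, h]
      · rw [h, h', max_eq_right (by linarith), zero_mul]
    · rcases a0 with h | ⟨h, h'⟩
      · rcases d.2.1 with h5 | h5
        · rcases d.2.2.1 with h6 | h6
          · simp [h6, h]
          · rw [h5, h6, h, max_eq_right (a := -_) (by simpa using h0), mul_zero]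
        · simp [h5, h]
      · rw [h, h', max_eq_right (a := -_) (by linarith), mul_zero]
    · rw [mul_eq_zero]; grind⟩

/-- right homotopy -/
def stepK (q : I × (Yt (n + 2) × ℝ)) : Yt (n + 2) × ℝ :=
  (⟨upd2 n (max (q.2.1.1 0 - q.1 * max (-q.2.2) 0) 0)
    (max (q.2.1.1 (n + 1) - q.1 * max (-q.2.2) 0) 0) q.2.1.1, by
    obtain ⟨⟨τ, t0, t1⟩, g, r⟩ := q
    obtain ⟨h0, h1, d⟩ := Yt.prods2 g.2
    have e1 := mul_nonneg t0 (le_max_right (-r) 0)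
    dsimp only
    refine upd2_mem (le_max_right _ _) (le_max_right _ _) (max_le (by linarith) h0)
      (max_le (by linarith) h1) ?_ g.2.1 g.2.2.2.1
    rcases d with d | d
    · rw [d, max_eq_right (by linarith), zero_mul]
    · rw [d, max_eq_right (a := 0 - _) (by linarith), mul_zero]⟩,
  max q.2.2 0 - ((1 - q.1) * max (-q.2.2) 0 + q.1 * (max (max (-q.2.2) 0 - q.2.1.1 (n + 1)) 0
    + max (max (-q.2.2) 0 - q.2.1.1 0) 0)))

end Step

theorem Yt.coord {t : ℕ} (i : ℕ) : Continuous fun f : Yt t => f.1 i :=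
  (continuous_apply i).comp continuous_subtype_val

theorem step (n : ℕ) : CE (Yt (n + 5)) (Yt (n + 2) × ℝ) := by
  have c5 : ∀ i, Continuous fun f : Yt (n + 5) => f.1 i := Yt.coord
  have c2 : ∀ i, Continuous fun f : Yt (n + 2) => f.1 i := Yt.coord
  have c5' : ∀ i, Continuous fun f : I × Yt (n + 5) => f.2.1 i := fun i =>
    (c5 i).comp continuous_snd
  have c2' : ∀ i, Continuous fun f : Yt (n + 2) × ℝ => f.1.1 i := fun i =>
    (c2 i).comp continuous_fst
  have c2'' : ∀ i, Continuous fun f : I × (Yt (n + 2) × ℝ) => f.2.1.1 i := fun i =>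
    (c2' i).comp continuous_snd
  refine CE.mk' (stepF n) (stepG n) (stepH n) (stepK n) ?_ ?_ ?_ ?_ ?_ ?_ ?_ ?_ ?_ ?_ ?_ ?_
  · unfold stepF
    refine Continuous.prodMk (Continuous.subtype_mk (upd2_continuous n ?_ ?_ c5) _) ?_
    · exact ((c5 0).sub (c5 (n + 1))).max continuous_const
    · exact ((c5 (n + 1)).sub (c5 0)).max continuous_const
    · exact (((c5 (n + 3)).add ((c5 0).min (c5 (n + 1)))).sub (c5 (n + 2))).sub (c5 (n + 4))
  · unfold stepG
    refine Continuous.subtype_mk (upd5_continuous n ?_ ?_ ?_ ?_ ?_ c2') _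
    all_goals fun_prop
  · unfold stepH
    refine Continuous.subtype_mk (upd5_continuous n ?_ ?_ ?_ ?_ ?_ c5') _
    all_goals fun_prop
  · unfold stepK
    refine Continuous.prodMk (Continuous.subtype_mk (upd2_continuous n ?_ ?_ c2'') _) ?_
    all_goals fun_prop
  · intro f
    obtain ⟨h0, h1, h2, h3, h4, d⟩ := Yt.prods f.2
    rw [stepF, Prod.ext_iff, Prod.fst_zero, Prod.snd_zero, Yt.eq_zero, upd2_eq_zero, Yt.eq_zero']
    constructor
    · rintro ⟨⟨e0, e1, e⟩, er⟩
      have hz := f.2.2.1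
      have q : f.1 0 = 0 ∧ f.1 (n + 1) = 0 ∧ f.1 (n + 2) = 0 ∧ f.1 (n + 3) = 0 ∧
        f.1 (n + 4) = 0 := by grind
      intro i
      obtain ⟨q0, q1, q2, q3, q4⟩ := q
      by_cases i0 : i = 0
      · rw [i0, q0]
      by_cases i1 : i = n + 1
      · rw [i1, q1]
      by_cases i2 : i = n + 2
      · rw [i2, q2]
      by_cases i3 : i = n + 3
      · rw [i3, q3]
      by_cases i4 : i = n + 4
      · rw [i4, q4]
      by_cases hi : i < n + 2
      · exact e i i0 i1 hi
      · exact hz i (by omega)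
    · intro h
      simp [h]
  · intro p
    obtain ⟨g, r⟩ := p
    obtain ⟨h0, h1, d⟩ := Yt.prods2 g.2
    rw [stepG, Prod.ext_iff, Prod.fst_zero, Prod.snd_zero, Yt.eq_zero, upd5_eq_zero, Yt.eq_zero']
    dsimp only
    constructor
    · rintro ⟨e0, e1, e2, e3, e4, e⟩
      have hz := g.2.2.1
      have q : g.1 0 = 0 ∧ g.1 (n + 1) = 0 ∧ r = 0 := by grind
      refine ⟨fun i => ?_, q.2.2⟩
      by_cases i0 : i = 0
      · rw [i0, q.1]
      by_cases i1 : i = n + 1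
      · rw [i1, q.2.1]
      by_cases hi : i < n + 2
      · exact e i i0 i1 (by omega) (by omega) (by omega)
      · exact hz i (by omega)
    · rintro ⟨h, rfl⟩
      simp [h]
  · rintro ⟨τ, t0, t1⟩ f
    obtain ⟨h0, h1, h2, h3, h4, d1, d2, d3, d4⟩ := Yt.prods f.2
    rw [stepH, Yt.eq_zero, upd5_eq_zero, Yt.eq_zero']
    dsimp only
    constructor
    · rintro ⟨e0, e1, e2, e3, e4, e⟩
      have hz := f.2.2.1
      have q : f.1 0 = 0 ∧ f.1 (n + 1) = 0 ∧ f.1 (n + 2) = 0 ∧ f.1 (n + 3) = 0 ∧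
          f.1 (n + 4) = 0 := by
        have hm : 0 ≤ min (f.1 0) (f.1 (n + 1)) := le_min h0 h1
        have e5 := mul_nonneg t0 hm
        have e6 := mul_nonneg t0 h2
        have e7 := mul_nonneg t0 h4
        have y0 : f.1 (n + 3) = 0 := by linarith
        have m0 : τ * min (f.1 0) (f.1 (n + 1)) = 0 := by linarith
        rw [max_eq_right_iff] at e0 e1 e2 e4
        have u0 : f.1 (n + 1) = f.1 (n + 2) + τ * f.1 (n + 4) := by linarith
        have w0 : f.1 0 = f.1 (n + 4) + τ * f.1 (n + 2) := by linarith
        clear e0 e1 e2 e4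
        have x0 : f.1 (n + 2) = 0 := by
          rcases d1 with d | d
          · linarith
          · exact d
        have z0 : f.1 (n + 4) = 0 := by
          rcases d4 with d | d
          · linarith
          · exact d
        rw [x0, z0] at u0 w0
        exact ⟨by simpa using w0, by simpa using u0, x0, y0, z0⟩
      intro i
      obtain ⟨q0, q1, q2, q3, q4⟩ := q
      by_cases i0 : i = 0
      · rw [i0, q0]
      by_cases i1 : i = n + 1
      · rw [i1, q1]
      by_cases i2 : i = n + 2
      · rw [i2, q2]
      by_cases i3 : i = n + 3
      · rw [i3, q3]
      by_cases i4 : i = n + 4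
      · rw [i4, q4]
      exact e i i0 i1 i2 i3 i4
    · intro h
      simp [h]
  · rintro ⟨τ, t0, t1⟩ ⟨g, r⟩
    obtain ⟨h0, h1, d⟩ := Yt.prods2 g.2
    rw [stepK, Prod.ext_iff, Prod.fst_zero, Prod.snd_zero, Yt.eq_zero, upd2_eq_zero,
      Prod.ext_iff, Prod.fst_zero, Prod.snd_zero, Yt.eq_zero']
    dsimp only
    constructor
    · rintro ⟨⟨e0, e1, e⟩, er⟩
      have hz := g.2.2.1
      have r0 : r = 0 := by
        rcases lt_trichotomy r 0 with hr | hr | hr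
        · exfalso
          rw [max_eq_right hr.le, max_eq_left (by linarith : 0 ≤ -r)] at er
          have a1 : 0 ≤ max (-r - g.1 (n + 1)) 0 := le_max_right _ _
          have a2 : 0 ≤ max (-r - g.1 0) 0 := le_max_right _ _
          have a3 : -r ≤ max (-r - g.1 (n + 1)) 0 + max (-r - g.1 0) 0 := by
            rcases d with d | d
            · have := le_max_left (-r - g.1 0) 0
              linarith
            · have := le_max_left (-r - g.1 (n + 1)) 0
              linarith
          have := mul_le_mul_of_nonneg_left a3 t0
          nlinarith
        · exact hr
        · exfalso
          rw [max_eq_left hr.le, max_eq_right (by linarith : -r ≤ 0), max_eq_right (by linarith),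
            max_eq_right (by linarith)] at er
          simp at er
          linarith
      subst r0
      simp only [neg_zero, max_self, mul_zero, sub_zero, max_eq_left h0, max_eq_left h1] at e0 e1
      refine ⟨fun i => ?_, rfl⟩
      by_cases i0 : i = 0
      · rw [i0, e0]
      by_cases i1 : i = n + 1
      · rw [i1, e1]
      by_cases hi : i < n + 2
      · exact e i i0 i1 hi
      · exact hz i (by omega)
    · rintro ⟨h, rfl⟩
      simp [h]
  · intro f
    obtain ⟨h0, h1, h2, h3, h4, d1, d2, d3, d4⟩ := Yt.prods f.2
    apply Subtype.ext
    funext i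
    simp only [stepH, upd5, Set.Icc.coe_zero, zero_mul, sub_zero, add_zero]
    split_ifs <;> subst_vars <;> first | rfl | grind
  · intro f
    obtain ⟨h0, h1, h2, h3, h4, d1, d2, d3, d4⟩ := Yt.prods f.2
    have hz := f.2.2.1
    apply Subtype.ext
    funext i
    simp only [stepH, stepG, stepF, Set.Icc.coe_one, one_mul]
    unfold upd5
    simp only [upd2, if_true, Nat.add_eq_zero_iff, one_ne_zero, and_false, if_false]
    split_ifs
    · grind
    · grind
    · grind
    · grind
    · grind
    · rfl
    · exact hz i (by omega)
  · rintro ⟨g, r⟩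
    obtain ⟨h0, h1, d⟩ := Yt.prods2 g.2
    have hz := g.2.2.1
    refine Prod.ext (Subtype.ext (funext fun i => ?_)) ?_
    · simp only [stepK, upd2, Set.Icc.coe_zero, zero_mul, sub_zero]
      split_ifs
      · subst_vars; exact max_eq_left h0
      · subst_vars; exact max_eq_left h1
      · rfl
      · exact (hz i (by omega)).symm
    · simp only [stepK, Set.Icc.coe_zero]
      grind
  · rintro ⟨g, r⟩
    obtain ⟨h0, h1, d⟩ := Yt.prods2 g.2
    have hz := g.2.2.1
    refine Prod.ext (Subtype.ext (funext fun i => ?_)) ?_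
    · simp only [stepK, stepF, stepG, Set.Icc.coe_one, one_mul]
      unfold upd2
      simp only [upd5, if_true, Nat.add_eq_zero_iff, one_ne_zero, and_false, if_false]
      split_ifs
      all_goals first | omega | rfl | grind
    · simp only [stepK, stepF, stepG, Set.Icc.coe_one, one_mul]
      simp [upd5]
      grind

/-- forward map of the base case -/
def baseF (t : ℕ) (f : Yt t) : ℝ := f.1 0 + f.1 2 - f.1 1 - f.1 3

/-- values for the base case -/
def upd4 (p0 p1 p2 p3 : ℝ) (i : ℕ) : ℝ :=
  if i = 0 then p0 else if i = 1 then p1 else if i = 2 then p2 else if i = 3 then p3 else 0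

theorem upd4_mem {t : ℕ} (ht : t = 2 ∨ t = 4) {p0 p1 p2 p3 : ℝ} (h0 : 0 ≤ p0) (h1 : 0 ≤ p1)
    (h2 : 0 ≤ p2) (h3 : 0 ≤ p3) (h01 : p0 * p1 = 0) (h12 : p1 * p2 = 0) (h23 : p2 * p3 = 0)
    (h30 : p0 * p3 = 0) (hz : t = 2 → p2 = 0 ∧ p3 = 0) : upd4 p0 p1 p2 p3 ∈ YtSet t := by
  refine ⟨?_, ?_, ?_, ?_⟩
  · intro i
    unfold upd4
    split_ifs <;> first | assumption | exact le_rfl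
  · intro i hi
    unfold upd4
    rcases ht with rfl | rfl
    · obtain ⟨rfl, rfl⟩ := hz rfl
      split_ifs <;> first | omega | rfl
    · split_ifs <;> first | omega | rfl
  · intro i
    match i with
    | 0 => simpa [upd4] using h01
    | 1 => simpa [upd4] using h12
    | 2 => simpa [upd4] using h23
    | i + 3 => simp [upd4]
  · rcases ht with rfl | rfl
    · simpa [upd4] using h01
    · simpa [upd4] using h30

theorem base_prods {t : ℕ} (ht : t = 2 ∨ t = 4) {f : ℕ → ℝ} (h : f ∈ YtSet t) :
    0 ≤ f 0 ∧ 0 ≤ f 1 ∧ 0 ≤ f 2 ∧ 0 ≤ f 3 ∧ f 0 * f 1 = 0 ∧ f 1 * f 2 = 0 ∧ f 2 * f 3 = 0 ∧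
      f 0 * f 3 = 0 ∧ (t = 2 → f 2 = 0 ∧ f 3 = 0) ∧ (∀ i, 4 ≤ i → f i = 0) := by
  refine ⟨h.1 _, h.1 _, h.1 _, h.1 _, h.2.2.1 0, h.2.2.1 1, h.2.2.1 2, ?_, ?_, ?_⟩
  · rcases ht with rfl | rfl
    · rw [h.2.1 3 (by omega), mul_zero]
    · exact h.2.2.2
  · rintro rfl
    exact ⟨h.2.1 2 (by omega), h.2.1 3 (by omega)⟩
  · intro i hi
    exact h.2.1 i (by omega)

theorem upd4_continuous {X : Type} [TopologicalSpace X] {p0 p1 p2 p3 : X → ℝ}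
    (h0 : Continuous p0) (h1 : Continuous p1) (h2 : Continuous p2) (h3 : Continuous p3) :
    Continuous fun x => upd4 (p0 x) (p1 x) (p2 x) (p3 x) := by
  refine continuous_pi fun i => ?_
  unfold upd4
  split_ifs <;> first | assumption | exact continuous_const

theorem upd4_eq_zero {p0 p1 p2 p3 : ℝ} :
    (∀ i, upd4 p0 p1 p2 p3 i = 0) ↔ p0 = 0 ∧ p1 = 0 ∧ p2 = 0 ∧ p3 = 0 := by
  constructor
  · intro h
    exact ⟨by simpa [upd4] using h 0, by simpa [upd4] using h 1, by simpa [upd4] using h 2,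
      by simpa [upd4] using h 3⟩
  · rintro ⟨h0, h1, h2, h3⟩ i
    unfold upd4
    split_ifs <;> first | assumption | rfl

theorem base_zero {t : ℕ} (ht : t = 2 ∨ t = 4) (f : Yt t) :
    f = 0 ↔ f.1 0 = 0 ∧ f.1 1 = 0 ∧ f.1 2 = 0 ∧ f.1 3 = 0 := by
  rw [Yt.eq_zero']
  constructor
  · intro h
    exact ⟨h _, h _, h _, h _⟩
  · rintro ⟨h0, h1, h2, h3⟩ i
    match i with
    | 0 => exact h0
    | 1 => exact h1
    | 2 => exact h2
    | 3 => exact h3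
    | i + 4 => exact (base_prods ht f.2).2.2.2.2.2.2.2.2.2 _ (by omega)

/-- backward map of the base case -/
def baseG {t : ℕ} (ht : t = 2 ∨ t = 4) (r : ℝ) : Yt t :=
  ⟨upd4 (max r 0) (max (-r) 0) 0 0, upd4_mem ht (le_max_right _ _) (le_max_right _ _) le_rfl le_rfl
    (by rw [mul_eq_zero]; grind) (mul_zero _) (mul_zero _) (mul_zero _) (fun _ => ⟨rfl, rfl⟩)⟩

/-- homotopy of the base case -/
def baseH {t : ℕ} (ht : t = 2 ∨ t = 4) (q : I × Yt t) : Yt t :=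
  ⟨upd4 (q.2.1 0 + q.1 * q.2.1 2) (q.2.1 1 + q.1 * q.2.1 3) ((1 - q.1) * q.2.1 2)
      ((1 - q.1) * q.2.1 3), by
    obtain ⟨⟨τ, t0, t1⟩, f⟩ := q
    obtain ⟨h0, h1, h2, h3, e01, e12, e23, e03, hz, -⟩ := base_prods ht f.2
    have e1 := mul_nonneg t0 h2
    have e2 := mul_nonneg t0 h3
    have t1' := sub_nonneg.2 t1
    dsimp only at *
    refine upd4_mem ht (by linarith) (by linarith) (mul_nonneg t1' h2) (mul_nonneg t1' h3)
      ?_ ?_ ?_ ?_ ?_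
    · linear_combination e01 + τ * e12 + τ * e03 + τ ^ 2 * e23
    · linear_combination (1 - τ) * e12 + τ * (1 - τ) * e23
    · linear_combination (1 - τ) ^ 2 * e23
    · linear_combination (1 - τ) * e03 + τ * (1 - τ) * e23
    · intro h
      rw [(hz h).1, (hz h).2]
      simp⟩

theorem base {t : ℕ} (ht : t = 2 ∨ t = 4) : CE (Yt t) ℝ := by
  have c : ∀ i, Continuous fun f : Yt t => f.1 i := Yt.coord
  have c' : ∀ i, Continuous fun f : I × Yt t => f.2.1 i := fun i =>
    (c i).comp continuous_snd
  refine CE.mk' (baseF t) (baseG ht) (baseH ht) Prod.snd ?_ ?_ ?_ continuous_snd ?_ ?_ ?_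
    (fun _ _ => Iff.rfl) ?_ ?_ (fun _ => rfl) ?_
  · exact (((c 0).add (c 2)).sub (c 1)).sub (c 3)
  · unfold baseG
    refine Continuous.subtype_mk (upd4_continuous ?_ ?_ ?_ ?_) _
    all_goals fun_prop
  · unfold baseH
    refine Continuous.subtype_mk (upd4_continuous ?_ ?_ ?_ ?_) _
    all_goals fun_prop
  · intro f
    obtain ⟨h0, h1, h2, h3, e01, e12, e23, e03, hz, -⟩ := base_prods ht f.2
    rw [base_zero ht, baseF]
    rw [mul_eq_zero] at e01 e12 e23 e03
    grind
  · intro r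
    rw [base_zero ht, baseG]
    simp only [upd4]
    grind
  · rintro ⟨τ, t0, t1⟩ f
    obtain ⟨h0, h1, h2, h3, e01, e12, e23, e03, hz, -⟩ := base_prods ht f.2
    rw [baseH, Yt.eq_zero, upd4_eq_zero, base_zero ht]
    dsimp only
    have e1 := mul_nonneg t0 h2
    have e2 := mul_nonneg t0 h3
    constructor
    · rintro ⟨a, b, c, d⟩
      have : f.1 2 = 0 := by linarith
      have : f.1 3 = 0 := by linarith
      refine ⟨by linarith, by linarith, by assumption, by assumption⟩
    · rintro ⟨a, b, c, d⟩
      simp [a, b, c, d]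
  · intro f
    obtain ⟨-, -, -, -, -, -, -, -, -, hz⟩ := base_prods ht f.2
    apply Subtype.ext
    funext i
    simp only [baseH, upd4, Set.Icc.coe_zero, zero_mul, sub_zero, add_zero, one_mul]
    split_ifs <;> subst_vars <;> first | rfl | exact (hz i (by omega)).symm
  · intro f
    obtain ⟨h0, h1, h2, h3, e01, e12, e23, e03, -, -⟩ := base_prods ht f.2
    rw [mul_eq_zero] at e01 e12 e23 e03
    apply Subtype.ext
    funext i
    simp only [baseH, baseG, baseF, upd4, Set.Icc.coe_one, one_mul, sub_self, zero_mul]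
    split_ifs
    · grind
    · grind
    · rfl
    · rfl
    · rfl
  · intro r
    simp only [baseG, baseF, upd4]
    grind

theorem Yt_euclid (k : ℕ) : ∀ t, (t = 3 * k + 2 ∨ t = 3 * k + 4) →
    CE (Yt t) (EuclideanSpace ℝ (Fin (k + 1))) := by
  induction k with
  | zero =>
    intro t ht
    exact (base (by simpa using ht)).trans (CE.ofFinrank (by simp))
  | succ k ih =>
    intro t ht
    obtain ⟨n, rfl⟩ : ∃ n, t = n + 5 := ⟨t - 5, by omega⟩
    refine (step n).trans ((ih (n + 2) (by omega)).prodR.trans (CE.ofFinrank (by simp)))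

instance (t : ℕ) : Zero (indCone (SimpleGraph.cycleGraph t)) := ⟨⟨0, by simp [indCone]⟩⟩

theorem cycle_adj_succ {t i : ℕ} (ht : 2 ≤ t) (h : i + 1 < t) :
    (SimpleGraph.cycleGraph t).Adj ⟨i, by omega⟩ ⟨i + 1, h⟩ := by
  obtain ⟨t, rfl⟩ : ∃ s, t = s + 2 := ⟨t - 2, by omega⟩
  rw [SimpleGraph.cycleGraph_adj']
  right
  rw [Fin.sub_def]
  dsimp only
  rw [show t + 2 - i + (i + 1) = 1 + (t + 2) by omega, Nat.add_mod_right,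
    Nat.mod_eq_of_lt (by omega)]

theorem cycle_adj_last {t : ℕ} (ht : 2 ≤ t) :
    (SimpleGraph.cycleGraph t).Adj ⟨0, by omega⟩ ⟨t - 1, by omega⟩ := by
  obtain ⟨t, rfl⟩ : ∃ s, t = s + 2 := ⟨t - 2, by omega⟩
  rw [SimpleGraph.cycleGraph_adj']
  left
  rw [Fin.sub_def]
  dsimp only
  rw [show t + 2 - (t + 2 - 1) + 0 = 1 by omega, Nat.mod_eq_of_lt (by omega)]

theorem cycle_adj_cases {t : ℕ} (ht : 2 ≤ t) (v w : Fin t)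
    (h : (w - v).val = 1) : w.1 = v.1 + 1 ∨ (w.1 = 0 ∧ v.1 = t - 1) := by
  rw [Fin.sub_def] at h
  dsimp only at h
  have hv := v.2
  have hw := w.2
  by_cases hvw : v.1 ≤ w.1
  · rw [show t - v.1 + w.1 = (w.1 - v.1) + t by omega, Nat.add_mod_right,
      Nat.mod_eq_of_lt (by omega)] at h
    omega
  · rw [Nat.mod_eq_of_lt (by omega)] at h
    omega

theorem cone_Yt {t : ℕ} (ht : 2 ≤ t) : CE (indCone (SimpleGraph.cycleGraph t)) (Yt t) := by
  have key : ∀ f : Yt t, ∀ v w : Fin t, (w - v).val = 1 → f.1 v * f.1 w = 0 := by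
    intro f v w h
    rcases cycle_adj_cases ht v w h with h | ⟨h, h'⟩
    · rw [h]; exact f.2.2.2.1 _
    · rw [h, h', mul_comm]; exact f.2.2.2.2
  refine CE.ofHomeo 
    { toFun := fun f => ⟨fun i => if h : i < t then f.1 ⟨i, h⟩ else 0, ?_⟩
      invFun := fun f => ⟨fun i => f.1 i, ?_⟩
      left_inv := ?_
      right_inv := ?_
      continuous_toFun := ?_
      continuous_invFun := ?_ } ?_
  · refine ⟨?_, ?_, ?_, ?_⟩
    · intro i
      dsimp only
      split_ifs
      · exact f.2.1 _
      · exact le_rfl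
    · intro i hi
      exact dif_neg (by omega)
    · intro i
      dsimp only
      by_cases h : i + 1 < t
      · rw [dif_pos (by omega : i < t), dif_pos h]
        exact f.2.2 _ _ (cycle_adj_succ ht h)
      · rw [dif_neg h, mul_zero]
    · dsimp only
      rw [dif_pos (by omega), dif_pos (by omega)]
      exact f.2.2 _ _ (cycle_adj_last ht)
  · refine ⟨fun v => f.2.1 _, fun v w h => ?_⟩
    rw [SimpleGraph.cycleGraph_adj'] at h
    rcases h with h | h
    · rw [mul_comm]; exact key f w v h
    · exact key f v w h
  · intro f
    apply Subtype.ext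
    funext i
    simp
  · intro f
    apply Subtype.ext
    funext i
    dsimp only
    split_ifs with h
    · rfl
    · exact (f.2.2.1 i (by omega)).symm
  · refine Continuous.subtype_mk (continuous_pi fun i => ?_) _
    split_ifs
    · exact (continuous_apply _).comp continuous_subtype_val
    · exact continuous_const
  · refine Continuous.subtype_mk (continuous_pi fun i => ?_) _
    exact (continuous_apply _).comp continuous_subtype_val
  · apply Subtype.ext
    funext i
    change (if h : i < t then (0 : ℝ) else 0) = 0
    simp

end Cycles

/-- **Kozlov**: for `t ≥ 4`, `k ≥ 1` with `t = 3k + 1` or `t = 3k - 1`, the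
independence complex of the cycle `C_t` is homotopy equivalent to the sphere
`S^{k-1}`. -/
theorem indComplex_cycle_homotopyEquiv_sphere (t k : ℕ) (ht : 4 ≤ t) (hk : 1 ≤ k)
    (htk : t = 3 * k + 1 ∨ t = 3 * k - 1) :
    Nonempty (ContinuousMap.HomotopyEquiv
      (indComplex (SimpleGraph.cycleGraph t))
      (Metric.sphere (0 : EuclideanSpace ℝ (Fin k)) 1)) := by
  obtain ⟨k, rfl⟩ : ∃ j, k = j + 1 := ⟨k - 1, by omega⟩
  obtain ⟨A⟩ := sphere_cone (indCone (SimpleGraph.cycleGraph t)) (by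
    intro x hx r hr
    refine ⟨fun v => mul_nonneg hr.le (hx.1 v), fun v w h => ?_⟩
    have := hx.2 v w h
    simp only [Pi.smul_apply, smul_eq_mul]
    linear_combination r ^ 2 * this)
  obtain ⟨B⟩ := sphere_cone (E := EuclideanSpace ℝ (Fin (k + 1))) Set.univ
    (fun _ _ _ _ => Set.mem_univ _)
  obtain ⟨C⟩ := ((cone_Yt (by omega)).trans (Yt_euclid k t (by omega))).homotopyEquiv
  let e1 : {f : Fin t → ℝ // f ∈ indCone (SimpleGraph.cycleGraph t) ∧ f ≠ 0} ≃ₜ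
      {f : indCone (SimpleGraph.cycleGraph t) // f ≠ 0} :=
    { toFun := fun f => ⟨⟨f.1, f.2.1⟩, fun h => f.2.2 (congrArg Subtype.val h)⟩
      invFun := fun f => ⟨f.1.1, f.1.2, fun h => f.2 (Subtype.ext h)⟩
      left_inv := fun _ => rfl
      right_inv := fun _ => rfl
      continuous_toFun := by fun_prop
      continuous_invFun := by fun_prop }
  let e2 : {x : EuclideanSpace ℝ (Fin (k + 1)) // x ∈ Set.univ ∧ x ≠ 0} ≃ₜ
      {x : EuclideanSpace ℝ (Fin (k + 1)) // x ≠ 0} :=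
    { toFun := fun f => ⟨f.1, f.2.2⟩
      invFun := fun f => ⟨f.1, Set.mem_univ _, f.2⟩
      left_inv := fun _ => rfl
      right_inv := fun _ => rfl
      continuous_toFun := by fun_prop
      continuous_invFun := by fun_prop }
  let e3 : {x : EuclideanSpace ℝ (Fin (k + 1)) // x ∈ Set.univ ∧ ‖x‖ = 1} ≃ₜ
      (Metric.sphere (0 : EuclideanSpace ℝ (Fin (k + 1))) 1) :=
    { toFun := fun f => ⟨f.1, mem_sphere_zero_iff_norm.2 f.2.2⟩
      invFun := fun f => ⟨f.1, Set.mem_univ _, mem_sphere_zero_iff_norm.1 f.2⟩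
      left_inv := fun _ => rfl
      right_inv := fun _ => rfl
      continuous_toFun := by fun_prop
      continuous_invFun := by fun_prop }
  exact ⟨(indHomeo _).toHomotopyEquiv.trans (A.trans (e1.toHomotopyEquiv.trans (C.trans
    (e2.symm.toHomotopyEquiv.trans (B.symm.trans e3.toHomotopyEquiv)))))⟩
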